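/- Let E₁, …, E_m be Banach spaces and F a normed space. If P : E₁ × ⋯ × E_m → F is an (n₁, …, n_m)-homogeneous polynomial that is separately continuous (continuous in each variable with the others fixed), then P is continuous. -/

import Mathlib

/-- `P : E₁ × ⋯ × E_m → F` is an `(n₁, …, n_m)`-homogeneous polynomial
(multipolynomial): separately, in each variable `i`, it is an `n i`-homogeneous
polynomial, i.e. the diagonal of some `n i`-linear map. -/
def IsMultiPoly {m : ℕ} {E : Fin m → Type*} [∀ i, NormedAddCommGroup (E i)]
    [∀ i, NormedSpace ℝ (E i)] {F : Type*} [NormedAddCommGroup F] [NormedSpace ℝ F]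
    (n : Fin m → ℕ) (P : (∀ i, E i) → F) : Prop :=
  ∀ (i : Fin m) (x : ∀ i, E i), ∃ A : MultilinearMap ℝ (fun _ : Fin (n i) => E i) F,
    ∀ y : E i, P (Function.update x i y) = A (fun _ => y)

/-- The coefficients of a vector-valued polynomial of degree at most `n` are controlled by its
sup norm on the unit interval. -/
theorem exists_norm_coeff_le (n : ℕ) (F : Type*) [NormedAddCommGroup F] [NormedSpace ℝ F] :
    ∃ C : ℝ, 0 ≤ C ∧ ∀ (c : Fin (n + 1) → F) (M : ℝ),
      (∀ t ∈ Set.Icc (0 : ℝ) 1, ‖∑ k : Fin (n + 1), t ^ (k : ℕ) • c k‖ ≤ M) → ∀ k, ‖c k‖ ≤ C * M := by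
  set v : Fin (n + 1) → ℝ := fun j => (j : ℝ) / (n + 1) with hv
  have hpos : (0 : ℝ) < n + 1 := by positivity
  have hinj : Function.Injective v := by
    intro i j hij
    have h : (i : ℝ) = (j : ℝ) := by
      simpa [hv, div_left_inj' hpos.ne'] using hij
    exact Fin.ext (by exact_mod_cast h)
  have hmem (j : Fin (n + 1)) : v j ∈ Set.Icc (0 : ℝ) 1 := by
    have : ((j : ℕ) : ℝ) ≤ n + 1 := by exact_mod_cast j.isLt.le
    exact ⟨by positivity, (div_le_one hpos).2 this⟩
  set V := Matrix.vandermonde v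
  have hV : V⁻¹ * V = 1 :=
    Matrix.nonsing_inv_mul V (isUnit_iff_ne_zero.2 (Matrix.det_vandermonde_ne_zero_iff.2 hinj))
  refine ⟨∑ i, ∑ j, |V⁻¹ i j|, by positivity, fun c M hM k => ?_⟩
  have hM0 : 0 ≤ M := (norm_nonneg _).trans (hM 0 (by simp))
  have hc : c k = ∑ j, V⁻¹ k j • ∑ l : Fin (n + 1), v j ^ (l : ℕ) • c l := by
    calc c k = ∑ l, (V⁻¹ * V) k l • c l := by simp [hV, Matrix.one_apply]
      _ = ∑ l : Fin (n + 1), ∑ j, (V⁻¹ k j * v j ^ (l : ℕ)) • c l := by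
        simp [Matrix.mul_apply, Finset.sum_smul, V, Matrix.vandermonde_apply]
      _ = _ := by
        rw [Finset.sum_comm]
        simp [Finset.smul_sum, smul_smul]
  calc ‖c k‖ ≤ ∑ j, |V⁻¹ k j| * M := by
        rw [hc]
        refine norm_sum_le_of_le _ fun j _ => ?_
        rw [norm_smul, Real.norm_eq_abs]
        exact mul_le_mul_of_nonneg_left (hM _ (hmem j)) (abs_nonneg _)
    _ = (∑ j, |V⁻¹ k j|) * M := by rw [Finset.sum_mul]
    _ ≤ _ := by
      refine mul_le_mul_of_nonneg_right ?_ hM0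
      exact Finset.single_le_sum (f := fun i => ∑ j, |V⁻¹ i j|)
        (fun i _ => Finset.sum_nonneg fun j _ => abs_nonneg _) (Finset.mem_univ k)

/-- The diagonal of an `n`-linear map is polynomial of degree at most `n` along lines. -/
theorem MultilinearMap.exists_diag_line_eq_sum {n : ℕ} {Y F : Type*} [AddCommGroup Y]
    [Module ℝ Y] [AddCommGroup F] [Module ℝ F] (A : MultilinearMap ℝ (fun _ : Fin n => Y) F)
    (a b : Y) :
    ∃ c : Fin (n + 1) → F, ∀ t : ℝ, A (fun _ => a + t • b) = ∑ k : Fin (n + 1), t ^ (k : ℕ) • c k := by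
  let g : Finset (Fin n) → Fin (n + 1) := fun s =>
    ⟨s.card, Nat.lt_succ_of_le (by simpa using s.card_le_univ)⟩
  refine ⟨fun k => ∑ s with g s = k, A (s.piecewise (fun _ => b) (fun _ => a)), fun t => ?_⟩
  have h1 : (fun _ : Fin n => a + t • b) = (fun _ => t • b) + (fun _ => a) := by
    ext; simp [add_comm]
  have h2 (s : Finset (Fin n)) : A (s.piecewise (fun _ => t • b) (fun _ => a)) =
      t ^ s.card • A (s.piecewise (fun _ => b) (fun _ => a)) := by
    have := A.map_piecewise_smul (fun _ => t) (s.piecewise (fun _ => b) (fun _ => a)) s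
    rw [Finset.prod_const] at this
    rw [← this]
    congr 1
    ext i
    by_cases hi : i ∈ s <;> simp [hi]
  rw [h1, A.map_add_univ, ← Finset.sum_fiberwise _ g]
  refine Finset.sum_congr rfl fun k _ => ?_
  rw [Finset.smul_sum]
  refine Finset.sum_congr rfl fun s hs => ?_
  rw [h2, ← (Finset.mem_filter.1 hs).2]

/-- A separately continuous function which is bounded near `x₀` on a ball in the second variable,
and polynomial of bounded degree along lines in that variable, is jointly continuous at `x₀`. -/
theorem continuousAt_uncurry_of_line_poly {X Y F : Type*} [TopologicalSpace X]
    [FirstCountableTopology X] [NormedAddCommGroup Y] [NormedSpace ℝ Y] [CompleteSpace Y]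
    [NormedAddCommGroup F] [NormedSpace ℝ F] {n : ℕ} {Q : X → Y → F} {x₀ : X}
    (hX : ∀ y, ContinuousAt (fun x => Q x y) x₀) (hY : ∀ x, Continuous (Q x))
    (hline : ∀ x a b, ∃ c : Fin (n + 1) → F, ∀ t : ℝ,
      Q x (a + t • b) = ∑ k : Fin (n + 1), t ^ (k : ℕ) • c k) (y₀ : Y) :
    ContinuousAt (Function.uncurry Q) (x₀, y₀) := by
  obtain ⟨C, hC, hcoeff⟩ := exists_norm_coeff_le n F
  obtain ⟨U, hU⟩ := (nhds x₀).exists_antitone_basis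
  -- By Baire, `Q` is bounded on a product of a neighborhood of `x₀` and some ball.
  obtain ⟨k, y₁, hy₁⟩ : ∃ k : ℕ, (interior {y | ∀ x ∈ U k, ‖Q x y‖ ≤ k}).Nonempty := by
    refine nonempty_interior_of_iUnion_of_closed (fun k => ?_) ?_
    · simp only [Set.ofPred_forall]
      exact isClosed_iInter fun x => isClosed_iInter fun _ =>
        isClosed_le (hY x).norm continuous_const
    · refine Set.eq_univ_of_forall fun y => Set.mem_iUnion.2 ?_
      have h : ∀ᶠ x in nhds x₀, ‖Q x y‖ < ‖Q x₀ y‖ + 1 :=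
        (hX y).norm.eventually (gt_mem_nhds (lt_add_one _))
      obtain ⟨i, -, hi⟩ := hU.toHasBasis.mem_iff.1 h
      obtain ⟨j, hj⟩ := exists_nat_ge (‖Q x₀ y‖ + 1)
      refine ⟨max i j, fun x hx => ?_⟩
      have h1 : ‖Q x y‖ < ‖Q x₀ y‖ + 1 := hi (hU.antitone (le_max_left i j) hx)
      exact h1.le.trans (hj.trans (by exact_mod_cast le_max_right i j))
  obtain ⟨r, hr, hball⟩ := Metric.mem_nhds_iff.1 (mem_interior_iff_mem_nhds.1 hy₁)
  -- Extrapolating along lines through `y₁`, `Q` is bounded near `(x₀, y₀)`.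
  obtain ⟨M, hM0, hM⟩ : ∃ M : ℝ, 0 ≤ M ∧ ∀ x ∈ U k, ∀ y ∈ Metric.ball y₀ 1, ‖Q x y‖ ≤ M := by
    set R := ‖y₀ - y₁‖ + 1 with hR
    have hRpos : 0 < R := by positivity
    set ε := r / (2 * R) with hε
    have hεpos : 0 < ε := by positivity
    refine ⟨∑ l : Fin (n + 1), (ε⁻¹) ^ (l : ℕ) * (C * k), by positivity, fun x hx y hy => ?_⟩
    obtain ⟨c, hc⟩ := hline x y₁ (ε • (y - y₁))
    have hyR : ‖y - y₁‖ ≤ R := by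
      have h1 : ‖y - y₀‖ < 1 := by simpa [dist_eq_norm] using hy
      have h2 := norm_sub_le_norm_sub_add_norm_sub y y₀ y₁
      linarith
    have hck := hcoeff c k fun t ht => by
      rw [← hc]
      refine hball ?_ x hx
      rw [mem_ball_iff_norm, add_sub_cancel_left, norm_smul, norm_smul, Real.norm_of_nonneg ht.1,
        Real.norm_of_nonneg hεpos.le]
      calc t * (ε * ‖y - y₁‖) ≤ 1 * (ε * R) := by
            gcongr
            exact ht.2
        _ = r / 2 := by rw [hε]; field_simp
        _ < r := half_lt_self hr
    have hy' : Q x y = ∑ l : Fin (n + 1), (ε⁻¹) ^ (l : ℕ) • c l := by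
      rw [← hc, smul_smul, inv_mul_cancel₀ hεpos.ne', one_smul, add_sub_cancel]
    rw [hy']
    refine norm_sum_le_of_le _ fun l _ => ?_
    rw [norm_smul, Real.norm_of_nonneg (by positivity)]
    exact mul_le_mul_of_nonneg_left (hck l) (by positivity)
  -- Hence `Q x` is Lipschitz at `y₀`, uniformly for `x` near `x₀`.
  have hlip : ∀ x ∈ U k, ∀ s ∈ Set.Ioc (0 : ℝ) 1, ∀ y ∈ Metric.ball y₀ s,
      ‖Q x y - Q x y₀‖ ≤ n * (C * M) * s := by
    intro x hx s hs y hy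
    obtain ⟨c, hc⟩ := hline x y₀ (s⁻¹ • (y - y₀))
    have hys : ‖y - y₀‖ < s := mem_ball_iff_norm.1 hy
    have hck := hcoeff c M fun t ht => by
      rw [← hc]
      refine hM x hx _ ?_
      rw [mem_ball_iff_norm, add_sub_cancel_left, norm_smul, norm_smul, Real.norm_of_nonneg ht.1,
        Real.norm_of_nonneg (inv_nonneg.2 hs.1.le)]
      have h1 : s⁻¹ * ‖y - y₀‖ < 1 := by
        rw [inv_mul_lt_iff₀ hs.1, mul_one]
        exact hys
      exact (mul_le_of_le_one_left (mul_nonneg (inv_nonneg.2 hs.1.le) (norm_nonneg _))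
        ht.2).trans_lt h1
    have hy' : Q x y = ∑ l : Fin (n + 1), s ^ (l : ℕ) • c l := by
      rw [← hc, smul_smul, mul_inv_cancel₀ hs.1.ne', one_smul, add_sub_cancel]
    have hy₀ : Q x y₀ = c 0 := by
      have := hc 0
      rw [zero_smul, add_zero, Fin.sum_univ_succ] at this
      simpa using this
    rw [hy', hy₀, Fin.sum_univ_succ, Fin.val_zero, pow_zero, one_smul, add_sub_cancel_left]
    calc ‖∑ i : Fin n, s ^ (i.succ : ℕ) • c i.succ‖ ≤ ∑ _i : Fin n, s * (C * M) := by
          refine norm_sum_le_of_le _ fun i _ => ?_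
          rw [norm_smul, Real.norm_of_nonneg (pow_nonneg hs.1.le _)]
          refine mul_le_mul ?_ (hck _) (norm_nonneg _) hs.1.le
          exact pow_le_of_le_one hs.1.le hs.2 (by simp)
      _ = n * (C * M) * s := by
          simp only [Finset.sum_const, Finset.card_univ, Fintype.card_fin, nsmul_eq_mul]
          ring
  rw [ContinuousAt, Metric.tendsto_nhds]
  intro δ hδ
  set K := n * (C * M) with hK
  have hK0 : 0 ≤ K := by positivity
  set s := min 1 (δ / (2 * (K + 1))) with hs
  have hspos : 0 < s := lt_min one_pos (by positivity)
  have hKs : K * s < δ / 2 := by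
    calc K * s ≤ K * (δ / (2 * (K + 1))) := by
          gcongr
          exact min_le_right _ _
      _ < (K + 1) * (δ / (2 * (K + 1))) := by
          gcongr
          linarith
      _ = δ / 2 := by field_simp
  have hx₀ : ∀ᶠ x in nhds x₀, x ∈ U k ∧ dist (Q x y₀) (Q x₀ y₀) < δ / 2 :=
    Filter.Eventually.and (hU.mem k) (Metric.tendsto_nhds.1 (hX y₀) _ (half_pos hδ))
  rw [nhds_prod_eq]
  filter_upwards [hx₀.prod_mk (Metric.ball_mem_nhds y₀ hspos)] with ⟨x, y⟩ ⟨⟨hx, hd⟩, hy⟩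
  have h1 : dist (Q x y) (Q x y₀) ≤ K * s := by
    rw [dist_eq_norm]
    exact hlip x hx s ⟨hspos, min_le_left _ _⟩ y hy
  have h2 := dist_triangle (Q x y) (Q x y₀) (Q x₀ y₀)
  change dist (Q x y) (Q x₀ y₀) < δ
  linarith

/-- For multipolynomials between Banach spaces, separate continuity implies
continuity. -/
theorem stmt13 {m : ℕ} {E : Fin m → Type*} [∀ i, NormedAddCommGroup (E i)]
    [∀ i, NormedSpace ℝ (E i)] [∀ i, CompleteSpace (E i)]
    {F : Type*} [NormedAddCommGroup F] [NormedSpace ℝ F]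
    (n : Fin m → ℕ) (P : (∀ i, E i) → F) (hP : IsMultiPoly n P)
    (hsep : ∀ (i : Fin m) (x : ∀ i, E i),
      Continuous fun y : E i => P (Function.update x i y)) :
    Continuous P := by
  have key (S : Finset (Fin m)) : ∀ z, Continuous fun x => P (S.piecewise x z) := by
    induction S using Finset.induction_on with
    | empty => simpa using fun _ => continuous_const
    | insert i S hi ih =>
      intro z
      let Q : (∀ j, E j) → E i → F := fun x y => P (Function.update (S.piecewise x z) i y)
      have hQx (y : E i) : Continuous fun x => Q x y := by
        have h : (fun x => Q x y) = fun x => P (S.piecewise x (Function.update z i y)) := by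
          ext x
          simp only [Q, Finset.update_piecewise_of_notMem S x z hi]
        rw [h]
        exact ih _
      have hline (x a b) : ∃ c : Fin (n i + 1) → F, ∀ t : ℝ,
          Q x (a + t • b) = ∑ k : Fin (n i + 1), t ^ (k : ℕ) • c k := by
        obtain ⟨A, hA⟩ := hP i (S.piecewise x z)
        obtain ⟨c, hc⟩ := A.exists_diag_line_eq_sum a b
        exact ⟨c, fun t => (hA _).trans (hc t)⟩
      have hQ : Continuous (Function.uncurry Q) := continuous_iff_continuousAt.2 fun p =>
        continuousAt_uncurry_of_line_poly (fun y => (hQx y).continuousAt)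
          (fun x => hsep i _) hline p.2
      have h : (fun x => P ((insert i S).piecewise x z)) =
          fun x => Function.uncurry Q (x, x i) := by
        ext x
        simp only [Q, Function.uncurry, Finset.piecewise_insert]
      rw [h]
      exact hQ.comp (continuous_id.prodMk (continuous_apply i))
  simpa using key Finset.univ 0
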